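/- Let p ≥ 5 be a prime, and for a positive integer n let V_p(n) denote the set of positive integers not exceeding n whose least prime divisor is p. Then there exists n_p such that for all integers n ≥ n_p, ∑_{j ∈ V_p(n)} (−1)^{s(j)} < 0. -/

import Mathlib

open Finset Filter Topology

noncomputable section

/-- `s n` is the number of 1's in the binary expansion of `n`. -/
def s (n : ℕ) : ℕ := (Nat.digits 2 n).count 1

/-- `S m x = ∑_{0 ≤ n < x, m ∣ n} (-1)^(s n)`. -/
def S (m x : ℕ) : ℝ := ∑ n ∈ Finset.range x, if m ∣ n then (-1 : ℝ) ^ (s n) else 0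

/-- `F α N = ∑_{n=0}^{N-1} e^{2πi(αn + s(n)/2)}`. -/
def F (α : ℝ) (N : ℕ) : ℂ :=
  ∑ n ∈ Finset.range N, Complex.exp (2 * Real.pi * Complex.I * ((α : ℂ) * n + (s n : ℂ) / 2))

/-- `bsq m = b_m ^ 2`, defined by cases on `m mod 3`. -/
def bsq (m : ℕ) : ℝ :=
  if m % 3 = 0 then
    Real.sin (Real.pi / 3 * (1 + 3 / m)) * (Real.sqrt 3 - Real.sin (Real.pi / 3 * (1 + 3 / m)))
  else if m % 3 = 1 then
    Real.sin (Real.pi / 3 * (1 - 1 / m)) * (Real.sqrt 3 - Real.sin (Real.pi / 3 * (1 - 1 / m)))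
  else
    Real.sin (Real.pi / 3 * (1 + 1 / m)) * (Real.sqrt 3 - Real.sin (Real.pi / 3 * (1 + 1 / m)))

/-- `b m` is the positive real number with `(b m)^2 = bsq m`. -/
def b (m : ℕ) : ℝ := Real.sqrt (bsq m)

/-- `lam m = λ_m = 1 + log₂ b_m`. -/
def lam (m : ℕ) : ℝ := 1 + Real.logb 2 (b m)

/-- `mu m = μ_m = (2 b_m + 1)/(2 b_m - 1)`. -/
def mu (m : ℕ) : ℝ := (2 * b m + 1) / (2 * b m - 1)

/-- `U m x`: positive integers `≤ x` divisible by `m` and not by 3. -/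
def U (m x : ℕ) : Finset ℕ := (Finset.Icc 1 x).filter (fun n => m ∣ n ∧ ¬ (3 ∣ n))

/-- `V p n`: positive integers `≤ n` whose least prime divisor is `p`. -/
def V (p n : ℕ) : Finset ℕ := (Finset.Icc 1 n).filter (fun j => Nat.minFac j = p)

/-- The Thue–Morse sign `(-1) ^ s n`. -/
def thueMorse (n : ℕ) : ℤ := (-1) ^ s n

lemma s_two_mul (n : ℕ) : s (2 * n) = s n := by
  rcases Nat.eq_zero_or_pos n with rfl | hn
  · simp
  · simp [s, Nat.digits_def' one_lt_two (show 0 < 2 * n by omega)]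

lemma s_two_mul_add_one (n : ℕ) : s (2 * n + 1) = s n + 1 := by
  have h1 : (2 * n + 1) % 2 = 1 := by omega
  have h2 : (2 * n + 1) / 2 = n := by omega
  simp [s, h1, h2]

lemma thueMorse_two_mul (n : ℕ) : thueMorse (2 * n) = thueMorse n := by
  simp [thueMorse, s_two_mul]

lemma thueMorse_two_mul_add_one (n : ℕ) : thueMorse (2 * n + 1) = -thueMorse n := by
  simp [thueMorse, s_two_mul_add_one, pow_succ]

lemma thueMorse_eq_or (n : ℕ) : thueMorse n = 1 ∨ thueMorse n = -1 :=
  neg_one_pow_eq_or ℤ (s n)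

lemma thueMorse_two_pow_add (k j : ℕ) (hj : j < 2 ^ k) :
    thueMorse (2 ^ k + j) = -thueMorse j := by
  induction k generalizing j with
  | zero =>
    obtain rfl : j = 0 := by simpa using hj
    simpa using thueMorse_two_mul_add_one 0
  | succ k ih =>
    rw [pow_succ] at hj
    obtain ⟨i, rfl | rfl⟩ : ∃ i, j = 2 * i ∨ j = 2 * i + 1 := ⟨j / 2, by omega⟩
    · rw [show 2 ^ (k + 1) + 2 * i = 2 * (2 ^ k + i) by ring, thueMorse_two_mul,
        thueMorse_two_mul, ih i (by omega)]
    · rw [show 2 ^ (k + 1) + (2 * i + 1) = 2 * (2 ^ k + i) + 1 by ring,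
        thueMorse_two_mul_add_one, thueMorse_two_mul_add_one, ih i (by omega)]

/-! ### The dominant sum -/

/-- The sum of the Thue–Morse signs over `j < n` with `j % 3 = 1`. -/
def residueSum (n : ℕ) : ℤ := ∑ j ∈ range n, if j % 3 = 1 then thueMorse j else 0

/-- The indicator function of the integers coprime to `6`. -/
def coprimeSix (n : ℕ) : ℤ := if n % 2 = 1 ∧ n % 3 ≠ 0 then 1 else 0

lemma sum_thueMorse_two_mul (n : ℕ) : ∑ j ∈ range (2 * n), thueMorse j = 0 := by
  induction n with
  | zero => simp
  | succ n ih =>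
    rw [show 2 * (n + 1) = 2 * n + 1 + 1 by ring, sum_range_succ, sum_range_succ, ih,
      thueMorse_two_mul, thueMorse_two_mul_add_one]
    ring

lemma neg_one_le_sum_thueMorse (n : ℕ) : -1 ≤ ∑ j ∈ range n, thueMorse j := by
  obtain ⟨m, rfl | rfl⟩ : ∃ m, n = 2 * m ∨ n = 2 * m + 1 := ⟨n / 2, by omega⟩
  · simp [sum_thueMorse_two_mul]
  · rw [sum_range_succ, sum_thueMorse_two_mul]
    rcases thueMorse_eq_or (2 * m) with h | h <;> simp [h]

lemma thueMorse_four_mul (n : ℕ) : thueMorse (4 * n) = thueMorse n ∧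
    thueMorse (4 * n + 1) = -thueMorse n ∧ thueMorse (4 * n + 2) = -thueMorse n ∧
    thueMorse (4 * n + 3) = thueMorse n := by
  refine ⟨?_, ?_, ?_, ?_⟩
  · rw [show 4 * n = 2 * (2 * n) by ring, thueMorse_two_mul, thueMorse_two_mul]
  · rw [show 4 * n + 1 = 2 * (2 * n) + 1 by ring, thueMorse_two_mul_add_one, thueMorse_two_mul]
  · rw [show 4 * n + 2 = 2 * (2 * n + 1) by ring, thueMorse_two_mul, thueMorse_two_mul_add_one]
  · rw [show 4 * n + 3 = 2 * (2 * n + 1) + 1 by ring, thueMorse_two_mul_add_one,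
      thueMorse_two_mul_add_one, neg_neg]

lemma residueSum_succ (n : ℕ) :
    residueSum (n + 1) = residueSum n + if n % 3 = 1 then thueMorse n else 0 :=
  sum_range_succ _ _

lemma residueSum_four_mul (n : ℕ) :
    residueSum (4 * n) = 3 * residueSum n - ∑ j ∈ range n, thueMorse j := by
  induction n with
  | zero => simp [residueSum]
  | succ n ih =>
    obtain ⟨h0, h1, h2, h3⟩ := thueMorse_four_mul n
    rw [show 4 * (n + 1) = 4 * n + 1 + 1 + 1 + 1 by ring]
    simp only [residueSum_succ, sum_range_succ, ih, add_assoc, Nat.reduceAdd, h0, h1, h2, h3]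
    split_ifs <;> omega

lemma residueSum_four_mul_add_le (n b : ℕ) (hb : b < 4) :
    residueSum (4 * n + b) ≤ 3 * residueSum n + 2 := by
  obtain ⟨h0, h1, h2, -⟩ := thueMorse_four_mul n
  have h := residueSum_four_mul n
  have hs := neg_one_le_sum_thueMorse n
  have ht := thueMorse_eq_or n
  interval_cases b
  · simp only [add_zero]
    omega
  · rw [residueSum_succ, h0]
    split_ifs <;> omega
  · rw [residueSum_succ (4 * n + 1), residueSum_succ, h0, h1]
    split_ifs <;> omega
  · rw [residueSum_succ (4 * n + 2), residueSum_succ (4 * n + 1), residueSum_succ, h0, h1, h2]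
    split_ifs <;> omega

lemma residueSum_le (k n : ℕ) (h1 : 16 * 4 ^ k ≤ n) (h2 : n < 64 * 4 ^ k) :
    residueSum n + 1 ≤ -2 * 3 ^ k := by
  induction k generalizing n with
  | zero =>
    have base : ∀ m < 64, 16 ≤ m → residueSum m + 1 ≤ -2 := by
      unfold residueSum thueMorse s
      decide +kernel
    simpa using base n (by simpa using h2) (by simpa using h1)
  | succ k ih =>
    rw [pow_succ] at h1 h2
    have h := ih (n / 4) (by omega) (by omega)
    have h' := residueSum_four_mul_add_le (n / 4) (n % 4) (Nat.mod_lt _ (by norm_num))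
    rw [Nat.div_add_mod] at h'
    rw [pow_succ]
    linarith

lemma sum_coprimeSix_two_mul (n : ℕ) : ∑ j ∈ range (2 * n), thueMorse j * coprimeSix j =
    residueSum n - ∑ j ∈ range n, thueMorse j := by
  induction n with
  | zero => simp [residueSum]
  | succ n ih =>
    rw [show 2 * (n + 1) = 2 * n + 1 + 1 by ring, sum_range_succ, sum_range_succ, ih,
      residueSum_succ, sum_range_succ, thueMorse_two_mul, thueMorse_two_mul_add_one]
    unfold coprimeSix
    split_ifs <;> omega

lemma sum_coprimeSix_le (k n : ℕ) (h1 : 32 * 4 ^ k ≤ n) (h2 : n < 128 * 4 ^ k) :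
    ∑ j ∈ range n, thueMorse j * coprimeSix j ≤ -2 * 3 ^ k := by
  have h := residueSum_le k (n / 2) (by omega) (by omega)
  have hs := neg_one_le_sum_thueMorse (n / 2)
  have h' := sum_coprimeSix_two_mul (n / 2)
  rcases Nat.even_or_odd' n with ⟨m, rfl | rfl⟩
  · rw [show 2 * m / 2 = m by omega] at *
    linarith
  · rw [show (2 * m + 1) / 2 = m by omega] at *
    rw [sum_range_succ, show coprimeSix (2 * m) = 0 by simp [coprimeSix]]
    linarith

/-! ### Exponential sums -/

lemma normSq_one_sub_sq (w : ℂ) (hw : Complex.normSq w = 1) :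
    Complex.normSq (1 - w ^ 2) = Complex.normSq (1 - w) * (4 - Complex.normSq (1 - w)) := by
  have h : 4 - Complex.normSq (1 - w) = Complex.normSq (1 + w) := by
    simp only [Complex.normSq_apply] at *
    simp only [Complex.sub_re, Complex.sub_im, Complex.add_re, Complex.add_im, Complex.one_re,
      Complex.one_im]
    linarith
  rw [h, ← map_mul]
  ring_nf

lemma normSq_one_sub_le (w : ℂ) (hw : Complex.normSq w = 1) : Complex.normSq (1 - w) ≤ 4 := by
  simp only [Complex.normSq_apply] at *
  simp only [Complex.sub_re, Complex.sub_im, Complex.one_re, Complex.one_im]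
  nlinarith [sq_nonneg (w.re + 1), mul_self_nonneg w.im]

lemma normSq_one_sub_ne_three (w : ℂ) (hw : Complex.normSq w = 1) (hw3 : w ^ 3 ≠ 1) :
    Complex.normSq (1 - w) ≠ 3 := by
  intro h
  simp only [Complex.normSq_apply] at *
  simp only [Complex.sub_re, Complex.sub_im, Complex.one_re, Complex.one_im] at h
  have hre : w.re = -1 / 2 := by linarith
  have him : w.im * w.im = 3 / 4 := by
    rw [hre] at hw
    linarith
  apply hw3
  apply Complex.ext
  · simp only [pow_succ, pow_zero, one_mul, Complex.mul_re, Complex.mul_im, Complex.one_re, hre]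
    linarith
  · simp only [pow_succ, pow_zero, one_mul, Complex.mul_re, Complex.mul_im, Complex.one_im, hre]
    linear_combination (-w.im) * him

lemma cube_mul_four_sub_lt (x : ℝ) (hx : x ≠ 3) : x ^ 3 * (4 - x) < 27 := by
  have h : 0 < (x - 3) ^ 2 := by positivity [sub_ne_zero.mpr hx]
  nlinarith [mul_pos h (show 0 < (x + 1) ^ 2 + 2 by positivity)]

lemma normSq_eq_one_of_pow {w : ℂ} {N : ℕ} (hN : N ≠ 0) (hw : w ^ N = 1) :
    Complex.normSq w = 1 := by
  rw [Complex.normSq_eq_norm_sq, Complex.norm_eq_one_of_pow_eq_one hw hN, one_pow]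

lemma exists_bound_roots (N : ℕ) (hN : N ≠ 0) : ∃ M : ℝ, 1 < M ∧ M < 27 ∧
    ∀ w : ℂ, w ^ N = 1 → w ^ 3 ≠ 1 →
      Complex.normSq (1 - w) ^ 2 * Complex.normSq (1 - w ^ 2) ≤ M := by
  let A : Finset ℝ := insert 2 (((Polynomial.nthRootsFinset N (1 : ℂ)).filter
    (fun w => w ^ 3 ≠ 1)).image
      (fun w => Complex.normSq (1 - w) ^ 2 * Complex.normSq (1 - w ^ 2)))
  have hA : A.Nonempty := insert_nonempty _ _
  refine ⟨A.max' hA, ?_, ?_, ?_⟩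
  · exact lt_of_lt_of_le one_lt_two (A.le_max' 2 (mem_insert_self _ _))
  · rw [Finset.max'_lt_iff]
    intro y hy
    simp only [A, mem_insert, mem_image, mem_filter,
      Polynomial.mem_nthRootsFinset (Nat.pos_of_ne_zero hN)] at hy
    rcases hy with rfl | ⟨w, ⟨hw, hw3⟩, rfl⟩
    · norm_num
    · have h1 := normSq_eq_one_of_pow hN hw
      rw [normSq_one_sub_sq w h1]
      rw [← mul_assoc, ← pow_succ]
      exact cube_mul_four_sub_lt _ (normSq_one_sub_ne_three w h1 hw3)
  · intro w hw hw3
    apply A.le_max'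
    simp only [A, mem_insert, mem_image, mem_filter,
      Polynomial.mem_nthRootsFinset (Nat.pos_of_ne_zero hN)]
    exact Or.inr ⟨w, ⟨hw, hw3⟩, rfl⟩

lemma sum_thueMorse_two_pow_add (z : ℂ) (k m : ℕ) (hm : m ≤ 2 ^ k) :
    ∑ j ∈ range (2 ^ k + m), (thueMorse j : ℂ) * z ^ j =
      ∑ j ∈ range (2 ^ k), (thueMorse j : ℂ) * z ^ j -
        z ^ 2 ^ k * ∑ j ∈ range m, (thueMorse j : ℂ) * z ^ j := by
  rw [sum_range_add, sub_eq_add_neg, mul_sum, ← sum_neg_distrib]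
  congr 1
  refine sum_congr rfl fun j hj => ?_
  rw [thueMorse_two_pow_add k j (lt_of_lt_of_le (mem_range.mp hj) hm), pow_add]
  push_cast
  ring

lemma sum_thueMorse_two_pow (z : ℂ) (k : ℕ) :
    ∑ j ∈ range (2 ^ k), (thueMorse j : ℂ) * z ^ j = ∏ i ∈ range k, (1 - z ^ 2 ^ i) := by
  induction k with
  | zero => simp [thueMorse, s]
  | succ k ih =>
    rw [pow_succ, mul_two, sum_thueMorse_two_pow_add z k _ le_rfl, prod_range_succ, ← ih]
    ring

lemma norm_prod_one_sub_pow_le (z : ℂ) (N : ℕ) (hN : N ≠ 0) (hz : z ^ N = 1)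
    (hz3 : ∀ i, z ^ (3 * 2 ^ i) ≠ 1) : ∃ ρ : ℝ, 1 < ρ ∧ ρ ^ 2 < 3 ∧
      ∀ k, ‖∏ i ∈ range k, (1 - z ^ 2 ^ i)‖ ≤ 2 * ρ ^ k := by
  obtain ⟨M, hM1, hM27, hM⟩ := exists_bound_roots N hN
  have hM0 : 0 ≤ M := by linarith
  let x : ℕ → ℝ := fun i => Complex.normSq (1 - z ^ 2 ^ i)
  have hx0 (i : ℕ) : 0 ≤ x i := Complex.normSq_nonneg _
  have hroot (i : ℕ) : (z ^ 2 ^ i) ^ N = 1 := by rw [pow_right_comm, hz, one_pow]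
  have hx4 (i : ℕ) : x i ≤ 4 := normSq_one_sub_le _ (normSq_eq_one_of_pow hN (hroot i))
  have hxM (i : ℕ) : x i ^ 2 * x (i + 1) ≤ M := by
    have h := hM (z ^ 2 ^ i) (hroot i) (by rw [← pow_mul, mul_comm]; exact hz3 i)
    rwa [← pow_mul, ← pow_succ] at h
  have hstep (k : ℕ) : (∏ i ∈ range k, x i) ^ 3 * x k ≤ 4 * M ^ k := by
    induction k with
    | zero => simpa using hx4 0
    | succ k ih =>
      calc (∏ i ∈ range (k + 1), x i) ^ 3 * x (k + 1)
          = ((∏ i ∈ range k, x i) ^ 3 * x k) * (x k ^ 2 * x (k + 1)) := by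
            rw [prod_range_succ]
            ring
        _ ≤ (4 * M ^ k) * M := by
            have := hx0 k
            have := hx0 (k + 1)
            exact mul_le_mul ih (hxM k) (by positivity) (by positivity)
        _ = 4 * M ^ (k + 1) := by ring
  have hcube (k : ℕ) : (∏ i ∈ range k, x i) ^ 3 ≤ 64 * M ^ k := by
    cases k with
    | zero => norm_num
    | succ k =>
      calc (∏ i ∈ range (k + 1), x i) ^ 3
          = ((∏ i ∈ range k, x i) ^ 3 * x k) * x k ^ 2 := by
            rw [prod_range_succ]
            ring
        _ ≤ (4 * M ^ k) * 4 ^ 2 := by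
            have := hx0 k
            exact mul_le_mul (hstep k) (pow_le_pow_left₀ this (hx4 k) 2) (by positivity)
              (by positivity)
        _ = 64 * M ^ k := by ring
        _ ≤ 64 * M ^ (k + 1) := by
            gcongr
            · exact hM1.le
            · omega
  obtain ⟨ρ, hρ0, hρ⟩ : ∃ ρ : ℝ, 0 ≤ ρ ∧ ρ ^ 6 = M :=
    ⟨M ^ ((6 : ℕ) : ℝ)⁻¹, by positivity, Real.rpow_inv_natCast_pow hM0 (by norm_num)⟩
  refine ⟨ρ, ?_, ?_, fun k => ?_⟩
  · exact lt_of_pow_lt_pow_left₀ 6 hρ0 (by rw [hρ]; simpa using hM1)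
  · refine lt_of_pow_lt_pow_left₀ 3 (by norm_num) ?_
    rw [← pow_mul, hρ]
    norm_num
    exact hM27
  · refine le_of_pow_le_pow_left₀ (n := 6) (by norm_num) (by positivity) ?_
    have h : ‖∏ i ∈ range k, (1 - z ^ 2 ^ i)‖ ^ 2 = ∏ i ∈ range k, x i := by
      rw [← Complex.normSq_eq_norm_sq, map_prod]
    calc ‖∏ i ∈ range k, (1 - z ^ 2 ^ i)‖ ^ 6
        = (‖∏ i ∈ range k, (1 - z ^ 2 ^ i)‖ ^ 2) ^ 3 := by ring
      _ ≤ 64 * M ^ k := by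
        rw [h]
        exact hcube k
      _ = (2 * ρ ^ k) ^ 6 := by
        rw [← hρ]
        ring

/-- The functions whose correlation with the Thue–Morse signs up to `2 ^ k` is `O(ρ ^ k)`
for some `ρ < √3`. -/
def negligible : Submodule ℂ (ℕ → ℂ) where
  carrier := {h | ∃ C ρ : ℝ, 0 ≤ C ∧ 1 < ρ ∧ ρ ^ 2 < 3 ∧ ∀ k n : ℕ, n ≤ 2 ^ k →
    ‖∑ j ∈ range n, (thueMorse j : ℂ) * h j‖ ≤ C * ρ ^ k}
  zero_mem' := ⟨0, 3 / 2, le_rfl, by norm_num, by norm_num, fun k n _ => by simp⟩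
  add_mem' := by
    rintro f g ⟨C, ρ, hC, hρ1, hρ3, hf⟩ ⟨D, σ, hD, hσ1, hσ3, hg⟩
    refine ⟨C + D, max ρ σ, by positivity, lt_max_of_lt_left hρ1, ?_, fun k n hn => ?_⟩
    · rcases max_choice ρ σ with h | h <;> rwa [h]
    · simp only [Pi.add_apply, mul_add, sum_add_distrib]
      refine (norm_add_le _ _).trans ?_
      rw [add_mul]
      refine add_le_add ((hf k n hn).trans ?_) ((hg k n hn).trans ?_)
      · gcongr
        exact le_max_left _ _
      · gcongr
        exact le_max_right _ _
  smul_mem' := by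
    rintro c f ⟨C, ρ, hC, hρ1, hρ3, hf⟩
    refine ⟨‖c‖ * C, ρ, by positivity, hρ1, hρ3, fun k n hn => ?_⟩
    simp only [Pi.smul_apply, smul_eq_mul, mul_left_comm _ c, ← mul_sum, norm_mul]
    rw [mul_assoc]
    exact mul_le_mul_of_nonneg_left (hf k n hn) (norm_nonneg c)

lemma pow_mem_negligible (z : ℂ) (N : ℕ) (hN : N ≠ 0) (hz : z ^ N = 1)
    (hz3 : ∀ i, z ^ (3 * 2 ^ i) ≠ 1) : (fun j : ℕ => z ^ j) ∈ negligible := by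
  obtain ⟨ρ, hρ1, hρ3, hρ⟩ := norm_prod_one_sub_pow_le z N hN hz hz3
  have hρ' : 0 < ρ - 1 := by linarith
  refine ⟨2 / (ρ - 1), ρ, by positivity, hρ1, hρ3, fun k => ?_⟩
  induction k with
  | zero =>
    intro n hn
    have h2 : 1 ≤ 2 / (ρ - 1) := by
      rw [le_div_iff₀ hρ']
      nlinarith
    rw [pow_zero] at hn ⊢
    interval_cases n
    · simp
      positivity
    · simpa [thueMorse, s] using h2
  | succ k ih =>
    intro n hn
    have hC : 2 / (ρ - 1) * ρ ^ (k + 1) = 2 * ρ ^ k + 2 / (ρ - 1) * ρ ^ k := by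
      field_simp
      ring
    rw [hC]
    rcases le_total n (2 ^ k) with h | h
    · exact (ih n h).trans (le_add_of_nonneg_left (by positivity))
    · obtain ⟨m, rfl⟩ := Nat.exists_eq_add_of_le h
      have hm : m ≤ 2 ^ k := by
        rw [pow_succ] at hn
        omega
      rw [sum_thueMorse_two_pow_add z k m hm, sum_thueMorse_two_pow]
      refine (norm_sub_le _ _).trans (add_le_add (hρ k) ?_)
      rw [norm_mul, norm_pow, Complex.norm_eq_one_of_pow_eq_one hz hN, one_pow, one_mul]
      exact ih m hm

/-! ### Sieving by characters -/

/-- The span of the functions `j ↦ z ^ j` with `z` an `N`-th root of unity. -/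
def rootSpan (N : ℕ) : Submodule ℂ (ℕ → ℂ) :=
  Submodule.span ℂ {h | ∃ z : ℂ, z ^ N = 1 ∧ h = fun j => z ^ j}

/-- The indicator function of the multiples of `q`. -/
def dvdIndicator (q : ℕ) : ℕ → ℂ := fun j => if q ∣ j then 1 else 0

lemma dvdIndicator_eq {q : ℕ} (hq : q ≠ 0) {ζ : ℂ} (hζ : IsPrimitiveRoot ζ q) :
    dvdIndicator q = (q : ℂ)⁻¹ • ∑ i ∈ range q, fun j : ℕ => (ζ ^ i) ^ j := by
  have hq' : (q : ℂ) ≠ 0 := by exact_mod_cast hq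
  funext j
  simp only [dvdIndicator, Pi.smul_apply, Finset.sum_apply, smul_eq_mul]
  simp only [pow_right_comm ζ _ j]
  split_ifs with h
  · simp [(hζ.pow_eq_one_iff_dvd j).mpr h, hq']
  · have h1 : ζ ^ j ≠ 1 := fun h' => h ((hζ.pow_eq_one_iff_dvd j).mp h')
    rw [geom_sum_eq h1, pow_right_comm, hζ.pow_eq_one]
    simp

lemma mul_dvdIndicator_mem_rootSpan {N q : ℕ} (hq : q ≠ 0) {f : ℕ → ℂ} (hf : f ∈ rootSpan N) :
    f * dvdIndicator q ∈ rootSpan (N * q) := by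
  have hζ := Complex.isPrimitiveRoot_exp q hq
  induction hf using Submodule.span_induction with
  | mem f h =>
    obtain ⟨z, hz, rfl⟩ := h
    rw [dvdIndicator_eq hq hζ, mul_smul_comm, mul_sum]
    refine Submodule.smul_mem _ _ (Submodule.sum_mem _ fun i _ => Submodule.subset_span ?_)
    refine ⟨z * Complex.exp (2 * Real.pi * Complex.I / q) ^ i, ?_, ?_⟩
    · rw [mul_pow, pow_mul, hz, one_pow, one_mul, mul_comm N q, pow_mul, pow_right_comm _ i,
        hζ.pow_eq_one, one_pow, one_pow]
    · funext j
      exact (mul_pow _ _ _).symm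
  | zero => simp
  | add f g _ _ hf hg =>
    rw [add_mul]
    exact add_mem hf hg
  | smul c f _ hf =>
    rw [smul_mul_assoc]
    exact Submodule.smul_mem _ _ hf

lemma rootSpan_mono {M N : ℕ} (h : M ∣ N) : rootSpan M ≤ rootSpan N := by
  apply Submodule.span_mono
  rintro f ⟨z, hz, rfl⟩
  obtain ⟨d, rfl⟩ := h
  exact ⟨z, by rw [pow_mul, hz, one_pow], rfl⟩

lemma mul_one_sub_dvdIndicator_mem_rootSpan {N q : ℕ} (hq : q ≠ 0) {f : ℕ → ℂ}
    (hf : f ∈ rootSpan N) : f * (1 - dvdIndicator q) ∈ rootSpan (N * q) := by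
  rw [mul_sub, mul_one]
  exact sub_mem (rootSpan_mono (dvd_mul_right N q) hf) (mul_dvdIndicator_mem_rootSpan hq hf)

lemma mul_pow_mem_negligible {N q : ℕ} (hN : N ≠ 0) (hq : q.Prime) (hq6 : ¬ q ∣ 6 * N)
    {z w : ℂ} (hz : z ^ N = 1) (hw : w ^ q = 1) (hw1 : w ≠ 1) :
    (fun j : ℕ => (z * w) ^ j) ∈ negligible := by
  refine pow_mem_negligible _ (N * q) (mul_ne_zero hN hq.ne_zero) ?_ fun i h => ?_
  · rw [mul_pow, pow_mul, hz, one_pow, one_mul, mul_comm N q, pow_mul, hw, one_pow]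
  · have h1 : w ^ (3 * 2 ^ i * N) = 1 := by
      have h2 : ((z * w) ^ (3 * 2 ^ i)) ^ N = 1 := by rw [h, one_pow]
      rwa [← pow_mul, mul_pow, mul_comm _ N, pow_mul z, hz, one_pow, one_mul, mul_comm N] at h2
    have : Fact q.Prime := ⟨hq⟩
    rw [← orderOf_dvd_iff_pow_eq_one, orderOf_eq_prime hw hw1] at h1
    apply hq6
    rcases hq.dvd_mul.mp h1 with h | h
    · rcases hq.dvd_mul.mp h with h | h
      · exact (h.trans (by norm_num : 3 ∣ 6)).mul_right N
      · exact ((hq.dvd_of_dvd_pow h).trans (by norm_num : 2 ∣ 6)).mul_right N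
    · exact h.mul_left 6

lemma mul_dvdIndicator_sub_mem_negligible {N q : ℕ} (hN : N ≠ 0) (hq : q.Prime)
    (hq6 : ¬ q ∣ 6 * N) {f : ℕ → ℂ} (hf : f ∈ rootSpan N) :
    f * dvdIndicator q - (q : ℂ)⁻¹ • f ∈ negligible := by
  have hζ := Complex.isPrimitiveRoot_exp q hq.ne_zero
  induction hf using Submodule.span_induction with
  | mem f h =>
    obtain ⟨z, hz, rfl⟩ := h
    have h0 : 0 ∈ range q := mem_range.mpr hq.pos
    rw [dvdIndicator_eq hq.ne_zero hζ, mul_smul_comm, mul_sum, ← smul_sub,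
      ← add_sum_erase _ _ h0]
    refine Submodule.smul_mem _ _ ?_
    rw [add_sub_right_comm]
    refine add_mem ?_ (sum_mem fun i hi => ?_)
    · convert negligible.zero_mem using 1
      funext j
      simp
    · rw [mem_erase, mem_range] at hi
      convert mul_pow_mem_negligible hN hq hq6 hz
        (w := Complex.exp (2 * Real.pi * Complex.I / q) ^ i) ?_ ?_ using 1
      · funext j
        exact (mul_pow _ _ _).symm
      · rw [pow_right_comm, hζ.pow_eq_one, one_pow]
      · exact hζ.pow_ne_one_of_pos_of_lt hi.1 hi.2
  | zero => simp
  | add f g _ _ hf hg =>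
    convert add_mem hf hg using 1
    rw [add_mul, smul_add]
    abel
  | smul c f _ hf =>
    convert Submodule.smul_mem _ c hf using 1
    rw [smul_mul_assoc, smul_sub, smul_comm]

lemma coprimeSix_eq : (fun j => (coprimeSix j : ℂ)) =
    1 * (1 - dvdIndicator 2) * (1 - dvdIndicator 3) := by
  funext j
  have h2 : 2 ∣ j ↔ ¬ j % 2 = 1 := by omega
  have h3 : 3 ∣ j ↔ j % 3 = 0 := by omega
  simp only [coprimeSix, dvdIndicator, Pi.mul_apply, Pi.sub_apply, Pi.one_apply, h2, h3]
  by_cases ha : j % 2 = 1 <;> by_cases hb : j % 3 = 0 <;> simp [ha, hb]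

lemma coprimeSix_mem_rootSpan : (fun j => (coprimeSix j : ℂ)) ∈ rootSpan 6 := by
  rw [coprimeSix_eq, show (6 : ℕ) = 1 * 2 * 3 by norm_num]
  have h1 : (1 : ℕ → ℂ) ∈ rootSpan 1 :=
    Submodule.subset_span ⟨1, by simp, by funext j; simp⟩
  have h2 := mul_one_sub_dvdIndicator_mem_rootSpan two_ne_zero h1
  exact mul_one_sub_dvdIndicator_mem_rootSpan three_ne_zero h2

lemma not_dvd_six_mul {q : ℕ} (hq : q.Prime) (hq5 : 5 ≤ q) (A : Finset ℕ) (hqA : q ∉ A)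
    (hA : ∀ r ∈ A, r.Prime) : ¬ q ∣ 6 * (6 * ∏ r ∈ A, r) := by
  have h6 : ¬ q ∣ 6 := fun h => by
    have := Nat.le_of_dvd (by norm_num) h
    interval_cases q <;> revert hq h <;> decide
  rw [hq.dvd_mul, hq.dvd_mul, hq.prime.dvd_finsetProd_iff]
  rintro (h | h | ⟨r, hr, h⟩)
  · exact h6 h
  · exact h6 h
  · rw [Nat.prime_dvd_prime_iff_eq hq (hA r hr)] at h
    exact hqA (h ▸ hr)

lemma exists_sieve (A : Finset ℕ) (hA : ∀ q ∈ A, q.Prime ∧ 5 ≤ q) : ∃ c : ℝ, 0 < c ∧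
    (fun j => (coprimeSix j : ℂ)) * ∏ q ∈ A, (1 - dvdIndicator q) ∈ rootSpan (6 * ∏ q ∈ A, q) ∧
    (fun j => (coprimeSix j : ℂ)) * ∏ q ∈ A, (1 - dvdIndicator q) -
      (c : ℂ) • (fun j => (coprimeSix j : ℂ)) ∈ negligible := by
  induction A using Finset.induction_on with
  | empty => exact ⟨1, one_pos, by simpa using coprimeSix_mem_rootSpan, by simp⟩
  | insert q A hqA ih =>
    obtain ⟨c, hc, hf, hneg⟩ := ih fun r hr => hA r (mem_insert_of_mem hr)
    obtain ⟨hq, hq5⟩ := hA q (mem_insert_self _ _)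
    have hprod : ∏ r ∈ A, r ≠ 0 :=
      prod_ne_zero_iff.mpr fun r hr => (hA r (mem_insert_of_mem hr)).1.ne_zero
    have hqdvd := not_dvd_six_mul hq hq5 A hqA fun r hr => (hA r (mem_insert_of_mem hr)).1
    set f := (fun j => (coprimeSix j : ℂ)) * ∏ q ∈ A, (1 - dvdIndicator q)
    have heq : (fun j => (coprimeSix j : ℂ)) * ∏ r ∈ insert q A, (1 - dvdIndicator r) =
        f * (1 - dvdIndicator q) := by
      rw [prod_insert hqA, mul_left_comm, mul_comm]
    have hq1 : (1 : ℝ) < q := by exact_mod_cast hq.one_lt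
    refine ⟨(1 - (q : ℝ)⁻¹) * c, mul_pos (sub_pos.mpr (inv_lt_one_of_one_lt₀ hq1)) hc, ?_, ?_⟩
    · rw [heq, prod_insert hqA, mul_comm q, ← mul_assoc]
      exact mul_one_sub_dvdIndicator_mem_rootSpan hq.ne_zero hf
    · rw [heq]
      have h := mul_dvdIndicator_sub_mem_negligible (mul_ne_zero (by norm_num) hprod) hq hqdvd hf
      convert sub_mem (Submodule.smul_mem _ (1 - (q : ℂ)⁻¹) hneg) h using 1
      funext j
      simp only [Pi.sub_apply, Pi.mul_apply, Pi.smul_apply, Pi.one_apply, smul_eq_mul]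
      push_cast
      ring

lemma minFac_indicator {p : ℕ} (hp : p.Prime) (hp5 : 5 ≤ p) (j : ℕ) :
    (coprimeSix j : ℂ) * (∏ q ∈ (Ico 5 p).filter Nat.Prime, (1 - dvdIndicator q)) j *
      dvdIndicator p j = if j.minFac = p then 1 else 0 := by
  simp only [Finset.prod_apply, Pi.sub_apply, Pi.one_apply]
  split_ifs with h
  · have hlt (q : ℕ) (hq : q.Prime) (hqp : q < p) : ¬ q ∣ j := fun hd =>
      absurd (Nat.minFac_le_of_dvd hq.two_le hd) (by omega)
    have h2 := hlt 2 Nat.prime_two (by omega)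
    have h3 := hlt 3 Nat.prime_three (by omega)
    have hc : coprimeSix j = 1 := if_pos (by omega)
    have hd : dvdIndicator p j = 1 := if_pos (h ▸ Nat.minFac_dvd j)
    rw [hc, hd, prod_eq_one]
    · simp
    · intro q hq
      rw [mem_filter, mem_Ico] at hq
      simp [dvdIndicator, hlt q hq.2 hq.1.2]
  · by_cases hpj : p ∣ j
    swap
    · simp [dvdIndicator, hpj]
    have hj1 : j ≠ 1 := by
      rintro rfl
      exact hp.one_lt.ne' (Nat.dvd_one.mp hpj)
    have hm := Nat.minFac_prime hj1
    have hmd := Nat.minFac_dvd j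
    have hlt : j.minFac < p := lt_of_le_of_ne (Nat.minFac_le_of_dvd hp.two_le hpj) h
    rcases lt_or_ge j.minFac 5 with h5 | h5
    · have hc : coprimeSix j = 0 := by
        refine if_neg ?_
        have := hm.two_le
        have h4 : j.minFac ≠ 4 := fun h4 => by
          rw [h4] at hm
          revert hm
          decide
        generalize j.minFac = m at *
        interval_cases m <;> omega
      simp [hc]
    · rw [prod_eq_zero (i := j.minFac)]
      · simp
      · exact mem_filter.mpr ⟨mem_Ico.mpr ⟨h5, hlt⟩, hm⟩
      · simp [dvdIndicator, hmd]

lemma exists_minFac_sub_mem_negligible {p : ℕ} (hp : p.Prime) (hp5 : 5 ≤ p) :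
    ∃ c : ℝ, 0 < c ∧ (fun j : ℕ => (if j.minFac = p then 1 else 0 : ℂ) - c * coprimeSix j) ∈
      negligible := by
  have hA : ∀ q ∈ (Ico 5 p).filter Nat.Prime, q.Prime ∧ 5 ≤ q := fun q hq =>
    ⟨(mem_filter.mp hq).2, (mem_Ico.mp (mem_filter.mp hq).1).1⟩
  obtain ⟨c, hc, hf, hneg⟩ := exists_sieve _ hA
  have hp0 : (0 : ℝ) < p := by exact_mod_cast hp.pos
  refine ⟨(p : ℝ)⁻¹ * c, by positivity, ?_⟩
  have hpdvd := not_dvd_six_mul hp hp5 _ (by simp) fun q hq => (hA q hq).1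
  have h := mul_dvdIndicator_sub_mem_negligible (mul_ne_zero (by norm_num)
    (prod_ne_zero_iff.mpr fun q hq => (hA q hq).1.ne_zero)) hp hpdvd hf
  convert add_mem h (Submodule.smul_mem _ (p : ℂ)⁻¹ hneg) using 1
  funext j
  rw [← minFac_indicator hp hp5 j]
  simp only [Pi.sub_apply, Pi.mul_apply, Pi.smul_apply, Pi.add_apply, smul_eq_mul]
  push_cast
  ring

lemma sum_V_eq {p : ℕ} (hp5 : 5 ≤ p) (n : ℕ) : ∑ j ∈ V p n, (-1 : ℝ) ^ s j =
    ∑ j ∈ range (n + 1), (thueMorse j : ℝ) * if j.minFac = p then 1 else 0 := by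
  have hV : V p n = (range (n + 1)).filter fun j => j.minFac = p := by
    ext j
    simp only [V, mem_filter, mem_Icc, mem_range]
    refine and_congr_left fun h => ?_
    have : j ≠ 0 := by
      rintro rfl
      simp at h
      omega
    omega
  simp [hV, sum_filter, thueMorse]

theorem stmt_14 (p : ℕ) (hp : p.Prime) (hp5 : 5 ≤ p) :
    ∃ n₀ : ℕ, ∀ n : ℕ, n₀ ≤ n → (∑ j ∈ V p n, (-1 : ℝ) ^ (s j)) < 0 := by
  obtain ⟨c, hc, C, ρ, hC, hρ1, hρ3, hbound⟩ := exists_minFac_sub_mem_negligible hp hp5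
  have hlim : Tendsto (fun k : ℕ => C * ρ ^ 7 * (ρ ^ 2 / 3) ^ k) atTop (𝓝 0) := by
    simpa using (tendsto_pow_atTop_nhds_zero_of_lt_one (by positivity)
      (by linarith : ρ ^ 2 / 3 < 1)).const_mul (C * ρ ^ 7)
  obtain ⟨K, hK⟩ := eventually_atTop.mp (hlim.eventually_lt_const (by positivity : 0 < 2 * c))
  refine ⟨32 * 4 ^ K, fun n hn => ?_⟩
  obtain ⟨k, hk1, hk2⟩ : ∃ k, 32 * 4 ^ k ≤ n + 1 ∧ n + 1 < 128 * 4 ^ k := by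
    have h32 : (n + 1) / 32 ≠ 0 := by
      have := Nat.one_le_pow K 4 (by norm_num)
      omega
    have h1 := Nat.pow_log_le_self 4 h32
    have h2 := Nat.lt_pow_succ_log_self (b := 4) (by norm_num) ((n + 1) / 32)
    rw [pow_succ] at h2
    exact ⟨Nat.log 4 ((n + 1) / 32), by omega, by omega⟩
  have hKk : K ≤ k := by
    have : 4 ^ K < 4 ^ (k + 1) := by
      rw [pow_succ]
      omega
    have := (Nat.pow_lt_pow_iff_right (by norm_num)).mp this
    omega
  have hmain : ((∑ j ∈ range (n + 1), thueMorse j * coprimeSix j : ℤ) : ℝ) ≤ -2 * 3 ^ k := by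
    exact_mod_cast sum_coprimeSix_le k (n + 1) hk1 hk2
  have herr := hbound (2 * k + 7) (n + 1) (by
    rw [pow_add, pow_mul]
    norm_num
    omega)
  have hsplit : ∑ j ∈ range (n + 1), (thueMorse j : ℂ) *
      ((if j.minFac = p then 1 else 0 : ℂ) - c * coprimeSix j) =
      ((∑ j ∈ V p n, (-1 : ℝ) ^ s j -
        c * ((∑ j ∈ range (n + 1), thueMorse j * coprimeSix j : ℤ) : ℝ) : ℝ) : ℂ) := by
    rw [sum_V_eq hp5]
    push_cast
    rw [mul_sum, ← sum_sub_distrib]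
    refine sum_congr rfl fun j _ => ?_
    split_ifs <;> push_cast <;> ring
  rw [hsplit, Complex.norm_real, Real.norm_eq_abs] at herr
  have hsmall : C * ρ ^ (2 * k + 7) < 2 * c * 3 ^ k := by
    have h := mul_lt_mul_of_pos_right (hK k hKk) (by positivity : (0 : ℝ) < 3 ^ k)
    rw [div_pow, mul_assoc, div_mul_cancel₀ _ (by positivity)] at h
    calc C * ρ ^ (2 * k + 7) = C * ρ ^ 7 * (ρ ^ 2) ^ k := by ring
      _ < 2 * c * 3 ^ k := h
  have h1 := (le_abs_self _).trans herr
  have h2 := mul_le_mul_of_nonneg_left hmain hc.le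
  linarith
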